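/- For any given positive integers s < m and any field K, there exists a finite simple graph G with no isolated vertices and matching number ν(G) = m such that g_{I(G)}(k) = s − (k − 1) for k = 1,…,s and g_{I(G)}(k) = 0 for k = s+1,…,m. -/

import Mathlib

open MvPolynomial

/-- The squarefree monomial `∏ i ∈ F, xᵢ`. -/
noncomputable def sqMon (K : Type) [Field K] {σ : Type} (F : Finset σ) :
    MvPolynomial σ K := ∏ i ∈ F, X i

/-- `I` is a squarefree monomial ideal if it is generated by squarefree monomials. -/
def IsSqfreeMonomialIdeal (K : Type) [Field K] {σ : Type}
    (I : Ideal (MvPolynomial σ K)) : Prop :=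
  ∃ 𝒢 : Set (Finset σ), I = Ideal.span ((sqMon K) '' 𝒢)

/-- The `k`-th squarefree power `I^[k]`: the ideal generated by all squarefree
monomials belonging to `I^k`. -/
noncomputable def sqfreePower (K : Type) [Field K] {σ : Type}
    (I : Ideal (MvPolynomial σ K)) (k : ℕ) : Ideal (MvPolynomial σ K) :=
  Ideal.span {m | ∃ F : Finset σ, m = sqMon K F ∧ m ∈ I ^ k}

/-- The monomial grade `ν(I)`: the largest `k` with `I^[k] ≠ (0)`. -/
noncomputable def monGrade (K : Type) [Field K] {σ : Type}
    (I : Ideal (MvPolynomial σ K)) : ℕ :=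
  sSup {k | sqfreePower K I k ≠ ⊥}

/-- The initial degree of a squarefree monomial ideal: the least degree of a
(squarefree) monomial belonging to it. -/
noncomputable def indeg (K : Type) [Field K] {σ : Type}
    (I : Ideal (MvPolynomial σ K)) : ℕ :=
  sInf {d | ∃ F : Finset σ, F.card = d ∧ sqMon K F ∈ I}

/-- The depth of `S/I` over the polynomial ring `S`: the longest length of a
regular sequence on `S/I` consisting of elements of the irrelevant maximal ideal. -/
noncomputable def polyDepth (K : Type) [Field K] {σ : Type}
    (I : Ideal (MvPolynomial σ K)) : ℕ :=
  sSup {k | ∃ rs : List (MvPolynomial σ K), rs.length = k ∧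
    (∀ r ∈ rs, r ∈ Ideal.span (Set.range (X : σ → MvPolynomial σ K))) ∧
    RingTheory.Sequence.IsRegular (MvPolynomial σ K ⧸ I) rs}

/-- The normalized depth function `g_I(k) = depth(S/I^[k]) - (indeg(I^[k]) - 1)`. -/
noncomputable def nDepth (K : Type) [Field K] {σ : Type}
    (I : Ideal (MvPolynomial σ K)) (k : ℕ) : ℤ :=
  (polyDepth K (sqfreePower K I k) : ℤ) - ((indeg K (sqfreePower K I k) : ℤ) - 1)

open MvPolynomial

/-- The edge ideal of a graph, generated by `xᵢxⱼ` for edges `{i,j}`. -/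
noncomputable def edgeIdeal (K : Type) [Field K] {V : Type} (G : SimpleGraph V) :
    Ideal (MvPolynomial V K) :=
  Ideal.span {m | ∃ i j, G.Adj i j ∧ m = X i * X j}

/-- A finite set of edges of `G` forming a matching (pairwise vertex-disjoint edges). -/
def IsMatchingSet {V : Type} (G : SimpleGraph V) (M : Finset (Sym2 V)) : Prop :=
  (↑M ⊆ G.edgeSet) ∧ ∀ e ∈ M, ∀ f ∈ M, e ≠ f → ∀ v, v ∈ e → v ∉ f

/-- The vertex set of a set of edges. -/
def matchVerts {V : Type} (M : Finset (Sym2 V)) : Set V := {v | ∃ e ∈ M, v ∈ e}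

/-- The matching number of `G`. -/
noncomputable def matchNum {V : Type} (G : SimpleGraph V) : ℕ :=
  sSup {k | ∃ M : Finset (Sym2 V), IsMatchingSet G M ∧ M.card = k}

/-- A graph is chordal if it has no induced cycle of length `≥ 4`. -/
def IsChordal {V : Type} (G : SimpleGraph V) : Prop :=
  ∀ m : ℕ, 4 ≤ m → ∀ v : ZMod m → V, Function.Injective v →
    ¬ (∀ i j : ZMod m, G.Adj (v i) (v j) ↔ (j = i + 1 ∨ i = j + 1))

/-- `v` is a cut vertex of the connected graph `G`:
removing it disconnects the graph. -/
def IsCutVertex {V : Type} (G : SimpleGraph V) (v : V) : Prop :=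
  G.Connected ∧ ¬ (G.induce {u | u ≠ v}).Connected

/-- `G` has no isolated vertices. -/
def NoIsolated {V : Type} (G : SimpleGraph V) : Prop := ∀ v, ∃ u, G.Adj v u

/-!
Take for `G` the disjoint union of `s` single edges and a complete graph on `2 * (m - s)` vertices.
The squarefree power `I(G)^[k]` is the Stanley–Reisner ideal of the complex of all vertex sets
containing no `k`-matching, and its initial degree is `2 * k`. As all components but one have only
two vertices, this complex is vertex decomposable in the nonpure sense: a vertex can be shed if its
component has evenly many vertices left, or if every other component has nothing left to be shed but
single vertices.

For a vertex decomposable complex the depth is the least size `d` of a facet. It is at most `d`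
because the facets give associated primes. It is at least `d` because the elementary symmetric
polynomials of degrees `d, …, 1` form a regular sequence: the exact sequence
`0 → S/(J : x) → S/J → S/(J + (x)) → 0` of a shedding vertex `x` reduces this to simplices, where
one goes down in `d` by passing to the boundary of a simplex with `d` vertices.

A facet of the complex of `G` meets every single edge and fills some number `p ≤ s` of them, and it
contains an odd number `2 * (k - 1 - p) + 1` of vertices of the large component unless it contains
all of these. Hence the least size of a facet is `max (s + k) (2 * k - 1)`, and the normalized depth
is `max (s - (k - 1)) 0`.
-/

open scoped Pointwise
open RingTheory.Sequence

section RegularSequences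

variable {R : Type*} [CommRing R]

lemma isWeaklyRegular_of_exact {M₁ M₂ M₃ : Type*} [AddCommGroup M₁] [Module R M₁]
    [AddCommGroup M₂] [Module R M₂] [AddCommGroup M₃] [Module R M₃]
    {f : M₁ →ₗ[R] M₂} {g : M₂ →ₗ[R] M₃} (hf : Function.Injective f) (hfg : Function.Exact f g)
    (hg : Function.Surjective g) {rs : List R} (h₁ : IsWeaklyRegular M₁ rs)
    (h₃ : IsWeaklyRegular M₃ rs) : IsWeaklyRegular M₂ rs := by
  induction rs generalizing M₁ M₂ M₃ with
  | nil => exact .nil R M₂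
  | cons r rs ih =>
    obtain ⟨h₁r, h₁⟩ := (isWeaklyRegular_cons_iff M₁ r rs).1 h₁
    obtain ⟨h₃r, h₃⟩ := (isWeaklyRegular_cons_iff M₃ r rs).1 h₃
    have hzero : Function.Exact (0 : M₁ →ₗ[R] M₁) f :=
      (LinearMap.exact_zero_iff_injective M₁ f).2 hf
    refine .cons (isSMulRegular_of_range_eq_ker hf hfg.linearMap_ker_eq.symm h₁r h₃r)
      (ih ?_ (QuotSMulTop.map_exact r hfg hg) (QuotSMulTop.map_surjective r hg) h₁ h₃)
    have hexact := QuotSMulTop.map_first_exact_on_four_term_exact_of_isSMulRegular_last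
      hzero hfg h₃r
    rw [map_zero] at hexact
    exact (LinearMap.exact_zero_iff_injective _ _).1 hexact

/-- The quotient of `R ⧸ J` by its multiples of `f` is `R ⧸ (J + (f))`. -/
noncomputable def quotSMulTopQuotientEquiv (J : Ideal R) (f : R) :
    QuotSMulTop f (R ⧸ J) ≃ₗ[R] R ⧸ (J ⊔ Ideal.span {f}) :=
  have hmap : f • (⊤ : Submodule R (R ⧸ J)) = Submodule.map J.mkQ (Ideal.span {f}) := by
    rw [← Submodule.range_mkQ J, LinearMap.range_eq_map, ← Submodule.map_pointwise_smul,
      ← Submodule.ideal_span_singleton_smul, smul_eq_mul, Ideal.mul_top]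
  (Submodule.quotEquivOfEq _ _ hmap).trans
    (Submodule.quotientQuotientEquivQuotientSup J (Ideal.span {f}))

lemma isWeaklyRegular_quotient_cons_iff {J : Ideal R} {f : R} {fs : List R} :
    IsWeaklyRegular (R ⧸ J) (f :: fs) ↔
      (∀ g, f * g ∈ J → g ∈ J) ∧ IsWeaklyRegular (R ⧸ (J ⊔ Ideal.span {f})) fs := by
  rw [isWeaklyRegular_cons_iff, isSMulRegular_quotient_iff_mem_of_smul_mem,
    (quotSMulTopQuotientEquiv J f).isWeaklyRegular_congr]
  rfl

lemma mem_sup_span_singleton_iff {J : Ideal R} {f x : R} :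
    x ∈ J ⊔ Ideal.span {f} ↔ ∃ g, x - f * g ∈ J := by
  rw [sup_comm, Ideal.mem_span_singleton_sup]
  constructor
  · rintro ⟨a, b, hb, rfl⟩
    exact ⟨a, by simpa [mul_comm] using hb⟩
  · rintro ⟨g, hg⟩
    exact ⟨g, _, hg, by ring⟩

lemma isWeaklyRegular_of_subsingleton {M : Type*} [AddCommGroup M] [Module R M] [Subsingleton M]
    (rs : List R) : IsWeaklyRegular M rs :=
  ⟨fun _ _ => Function.injective_of_subsingleton _⟩

lemma isWeaklyRegular_quotient_of_colon_of_sup {J J' : Ideal R} {x : R} {rs : List R}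
    (hJ' : ∀ h, x * h ∈ J ↔ h ∈ J') (h₁ : IsWeaklyRegular (R ⧸ J') rs)
    (h₂ : IsWeaklyRegular (R ⧸ (J ⊔ Ideal.span {x})) rs) : IsWeaklyRegular (R ⧸ J) rs := by
  let f : R ⧸ J' →ₗ[R] R ⧸ J := Submodule.mapQ J' J (LinearMap.mulLeft R x) fun h => (hJ' h).2
  let g : R ⧸ J →ₗ[R] R ⧸ (J ⊔ Ideal.span {x}) := Submodule.factor le_sup_left
  have hf : Function.Injective f := by
    rw [← LinearMap.ker_eq_bot, eq_bot_iff]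
    rintro ⟨h⟩ hh
    exact (Submodule.Quotient.mk_eq_zero _).2
      ((hJ' h).1 ((Submodule.Quotient.mk_eq_zero J).1 (LinearMap.mem_ker.1 hh)))
  have hfg : Function.Exact f g := by
    rintro ⟨y⟩
    calc g (Submodule.Quotient.mk y) = 0 ↔ y ∈ J ⊔ Ideal.span {x} :=
          Submodule.Quotient.mk_eq_zero _
      _ ↔ ∃ h, y - x * h ∈ J := mem_sup_span_singleton_iff
      _ ↔ Submodule.Quotient.mk y ∈ Set.range f := by
        constructor
        · rintro ⟨h, hh⟩
          exact ⟨Submodule.Quotient.mk h, ((Submodule.Quotient.eq J).2 hh).symm⟩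
        · rintro ⟨⟨h⟩, hh⟩
          exact ⟨h, (Submodule.Quotient.eq J).1 hh.symm⟩
  exact isWeaklyRegular_of_exact hf hfg (Submodule.factor_surjective le_sup_left) h₁ h₂

lemma mem_sup_span_of_mul_mem_sup_span {J : Ideal R} {x f : R} (hx : ∀ g, x * g ∈ J → g ∈ J)
    (hf : ∀ g, f * g ∈ J ⊔ Ideal.span {x} → g ∈ J ⊔ Ideal.span {x}) {h : R}
    (hh : x * h ∈ J ⊔ Ideal.span {f}) : h ∈ J ⊔ Ideal.span {f} := by
  obtain ⟨g, hg⟩ := mem_sup_span_singleton_iff.1 hh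
  have hfg : f * g ∈ J ⊔ Ideal.span {x} :=
    mem_sup_span_singleton_iff.2 ⟨h, by simpa using J.neg_mem hg⟩
  obtain ⟨g', hg'⟩ := mem_sup_span_singleton_iff.1 (hf g hfg)
  refine mem_sup_span_singleton_iff.2 ⟨g', hx _ ?_⟩
  convert J.add_mem hg (J.mul_mem_left f hg') using 1
  ring

lemma mem_sup_span_pow_of_mul_mem {J : Ideal R} {x f : R} (hx : ∀ g, x * g ∈ J → g ∈ J)
    (hf : ∀ g, f * g ∈ J ⊔ Ideal.span {x} → g ∈ J ⊔ Ideal.span {x}) (n : ℕ) {g : R}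
    (hg : f * g ∈ J) : g ∈ J ⊔ Ideal.span {x ^ n} := by
  induction n generalizing g with
  | zero => simp
  | succ n ih =>
    obtain ⟨h, hh⟩ := mem_sup_span_singleton_iff.1 (hf g (Ideal.mem_sup_left hg))
    have hfh : f * h ∈ J := hx _ <| by
      convert J.sub_mem hg (J.mul_mem_left f hh) using 1
      ring
    obtain ⟨h', hh'⟩ := mem_sup_span_singleton_iff.1 (ih hfh)
    refine mem_sup_span_singleton_iff.2 ⟨h', ?_⟩
    convert J.add_mem hh (J.mul_mem_left x hh') using 1
    ring

end RegularSequences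

section GradedRegularSequences

variable {R A : Type*} [CommRing R] [SetLike A R] [AddSubgroupClass A R] {𝒜 : ℕ → A} [GradedRing 𝒜]
  {J : Ideal R} {x : R} {d : ℕ}

lemma mem_of_forall_mem_sup_span_pow (hJ : J.IsHomogeneous 𝒜) (hd : 0 < d) (hx : x ∈ 𝒜 d) {g : R}
    (hg : ∀ n, g ∈ J ⊔ Ideal.span {x ^ n}) : g ∈ J := by
  refine (Ideal.IsHomogeneous.mem_iff 𝒜 hJ).2 fun i => ?_
  obtain ⟨h, hh⟩ := mem_sup_span_singleton_iff.1 (hg (i + 1))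
  have hxi : x ^ (i + 1) ∈ 𝒜 ((i + 1) * d) := SetLike.pow_mem_graded (i + 1) hx
  have hlow : (DirectSum.decompose 𝒜 (x ^ (i + 1) * h) i : R) = 0 :=
    DirectSum.coe_decompose_mul_of_left_mem_of_not_le 𝒜 hxi (by nlinarith)
  simpa only [DirectSum.decompose_sub, DirectSum.sub_apply, AddSubgroupClass.coe_sub, hlow,
    sub_zero] using hJ i hh

/-- Moving `x` from the front of a regular sequence to its end is possible because the elements
annihilated by `f` modulo `J` are divisible by all powers of `x`, hence vanish by degree. -/
lemma isWeaklyRegular_quotient_of_sup_of_homogeneous (hJ : J.IsHomogeneous 𝒜) (hd : 0 < d)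
    (hx : x ∈ 𝒜 d) (hxJ : ∀ g, x * g ∈ J → g ∈ J) {rs : List R}
    (hrs : ∀ r ∈ rs, SetLike.IsHomogeneousElem 𝒜 r)
    (h : IsWeaklyRegular (R ⧸ (J ⊔ Ideal.span {x})) rs) : IsWeaklyRegular (R ⧸ J) rs := by
  induction rs generalizing J with
  | nil => exact .nil R _
  | cons f fs ih =>
    obtain ⟨hf, hfs⟩ := isWeaklyRegular_quotient_cons_iff.1 h
    have hJf : (J ⊔ Ideal.span {f}).IsHomogeneous 𝒜 :=
      hJ.sup (Ideal.homogeneous_span _ _ (by simpa using hrs f (by simp)))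
    exact isWeaklyRegular_quotient_cons_iff.2
      ⟨fun g hg => mem_of_forall_mem_sup_span_pow hJ hd hx
        fun n => mem_sup_span_pow_of_mul_mem hxJ hf n hg,
      ih hJf (fun h => mem_sup_span_of_mul_mem_sup_span hxJ hf)
        (fun r hr => hrs r (by simp [hr])) (by rwa [sup_right_comm])⟩

end GradedRegularSequences

section DepthBound

open Order IsLocalRing

section LocalRing

variable {R : Type*} [CommRing R] [IsLocalRing R] [IsNoetherianRing R] {M : Type*}
  [AddCommGroup M] [Module R M] [Module.Finite R M]

lemma torsionBySet_eq_bot_of_le_smul_top {r : R} (hr : IsSMulRegular M r)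
    (hrm : r ∈ maximalIdeal R) {s : Set R}
    (hs : Submodule.torsionBySet R M s ≤ r • (⊤ : Submodule R M)) :
    Submodule.torsionBySet R M s = ⊥ := by
  have hle : Submodule.torsionBySet R M s ≤ maximalIdeal R • Submodule.torsionBySet R M s := by
    intro n hn
    obtain ⟨n', -, rfl⟩ := (Submodule.mem_smul_pointwise_iff_exists _ _ _).1 (hs hn)
    refine Submodule.smul_mem_smul hrm
      ((Submodule.mem_torsionBySet_iff _ _).2 fun p => hr.right_eq_zero_of_smul ?_)
    rw [smul_comm]
    exact (Submodule.mem_torsionBySet_iff _ _).1 hn p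
  exact Submodule.eq_bot_of_le_smul_of_le_jacobson_bot (maximalIdeal R) _
    (IsNoetherian.noetherian _) hle (IsLocalRing.maximalIdeal_le_jacobson _)

lemma exists_isAssociatedPrime_quotSMulTop_gt {r : R} (hr : IsSMulRegular M r)
    (hrm : r ∈ maximalIdeal R) {P : Ideal R} (hP : IsAssociatedPrime P M) :
    ∃ Q, IsAssociatedPrime Q (QuotSMulTop r M) ∧ P < Q := by
  obtain ⟨n₀, hn₀⟩ := (isAssociatedPrime_iff.1 hP).2
  have hn₀_ne : n₀ ≠ 0 := by
    rintro rfl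
    exact hP.isPrime.ne_top (by rw [hn₀]; ext; simp [Submodule.mem_colon_singleton])
  have hn₀P : n₀ ∈ Submodule.torsionBySet R M P := by
    refine (Submodule.mem_torsionBySet_iff _ _).2 fun p => ?_
    simpa [hn₀, Submodule.mem_colon_singleton] using p.2
  obtain ⟨n, hnP, hn⟩ : ∃ n ∈ Submodule.torsionBySet R M P, n ∉ r • (⊤ : Submodule R M) := by
    by_contra! hcon
    exact hn₀_ne (by simpa [torsionBySet_eq_bot_of_le_smul_top hr hrm hcon] using hn₀P)
  obtain ⟨Q, hQ, hle⟩ := exists_le_isAssociatedPrime_of_isNoetherianRing R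
    (M := QuotSMulTop r M) (Submodule.Quotient.mk n)
    (by rwa [ne_eq, Submodule.Quotient.mk_eq_zero])
  have hrQ : r ∈ Q := hle <| by
    rw [Submodule.mem_colon_singleton, ← Submodule.Quotient.mk_smul, Submodule.mem_bot,
      Submodule.Quotient.mk_eq_zero]
    exact Submodule.smul_mem_pointwise_smul _ _ _ trivial
  have hrP : r ∉ P := fun h => hn₀_ne <| hr.right_eq_zero_of_smul <| by
    simpa [hn₀, Submodule.mem_colon_singleton] using h
  refine ⟨Q, hQ, lt_of_le_of_ne (fun p hp => hle ?_) fun h => hrP (h ▸ hrQ)⟩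
  rw [Submodule.mem_colon_singleton, ← Submodule.Quotient.mk_smul,
    (Submodule.mem_torsionBySet_iff _ _).1 hnP ⟨p, hp⟩]
  simp

lemma length_le_coheight_of_isAssociatedPrime {rs : List R} (hrs : IsWeaklyRegular M rs)
    (hmem : ∀ r ∈ rs, r ∈ maximalIdeal R) {P : PrimeSpectrum R}
    (hP : IsAssociatedPrime P.asIdeal M) : (rs.length : ℕ∞) ≤ coheight P := by
  induction rs generalizing M P with
  | nil => simp
  | cons r rs ih =>
    obtain ⟨hr, hrs⟩ := (isWeaklyRegular_cons_iff M r rs).1 hrs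
    obtain ⟨Q, hQ, hPQ⟩ := exists_isAssociatedPrime_quotSMulTop_gt hr (hmem r (by simp)) hP
    have hlt : P < ⟨Q, hQ.isPrime⟩ := hPQ
    calc ((r :: rs).length : ℕ∞) = rs.length + 1 := by simp
      _ ≤ coheight (⟨Q, hQ.isPrime⟩ : PrimeSpectrum R) + 1 := by
        gcongr
        exact ih hrs (fun r' hr' => hmem r' (by simp [hr'])) hQ
      _ ≤ coheight P := coheight_add_one_le hlt

end LocalRing

lemma coheight_map_atPrime_le_ringKrullDim_quotient {R : Type*} [CommRing R] (m : Ideal R)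
    [m.IsPrime] {P : Ideal R} {Q : PrimeSpectrum (Localization.AtPrime m)}
    (hPQ : P.map (algebraMap R (Localization.AtPrime m)) ≤ Q.asIdeal) :
    (coheight Q : WithBot ℕ∞) ≤ ringKrullDim (R ⧸ P) := by
  rw [ringKrullDim_quotient, coheight_eq_krullDim_Ici]
  let contract (q : Set.Ici Q) : PrimeSpectrum.zeroLocus (P : Set R) :=
    ⟨PrimeSpectrum.comap (algebraMap R (Localization.AtPrime m)) q.1,
      fun _ hx => q.2 (hPQ (Ideal.mem_map_of_mem _ hx))⟩
  exact krullDim_le_of_strictMono contract fun _ _ hab =>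
    (IsLocalization.orderEmbedding m.primeCompl (Localization.AtPrime m)).strictMono hab

/-- Bruns–Herzog, *Cohen–Macaulay rings*, Proposition 1.2.13. -/
lemma length_le_ringKrullDim_quotient_of_isAssociatedPrime {R : Type*} [CommRing R]
    [IsNoetherianRing R] {M : Type*} [AddCommGroup M] [Module R M] [Module.Finite R M]
    {rs : List R} (hrs : IsWeaklyRegular M rs) {m : Ideal R} [m.IsPrime]
    (hmem : ∀ r ∈ rs, r ∈ m) {P : Ideal R} (hP : IsAssociatedPrime P M) (hPm : P ≤ m) :
    (rs.length : WithBot ℕ∞) ≤ ringKrullDim (R ⧸ P) := by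
  have := hP.isPrime
  let Rm := Localization.AtPrime m
  have hreg := hrs.of_isLocalizedModule Rm m.primeCompl
    (LocalizedModule.mkLinearMap m.primeCompl M)
  have hdisj : Disjoint (m.primeCompl : Set R) P :=
    Set.disjoint_left.2 fun x hx hxP => hx (hPm hxP)
  have hcomap : (P.map (algebraMap R Rm)).comap (algebraMap R Rm) = P :=
    IsLocalization.under_map_of_isPrime_disjoint m.primeCompl Rm inferInstance hdisj
  have hass : IsAssociatedPrime (P.map (algebraMap R Rm)) (LocalizedModule.AtPrime m M) :=
    Module.associatedPrimes.mem_associatedPrimes_of_comap_mem_associatedPrimes_of_isLocalizedModule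
      m.primeCompl (LocalizedModule.mkLinearMap m.primeCompl M) _ (by rwa [hcomap])
  have hlocal : ∀ r ∈ rs.map (algebraMap R Rm), r ∈ maximalIdeal Rm := by
    simpa using fun r hr => (IsLocalization.AtPrime.to_map_mem_maximal_iff Rm m r).2 (hmem r hr)
  have hlength := length_le_coheight_of_isAssociatedPrime (P := ⟨_, hass.isPrime⟩) hreg hlocal hass
  rw [List.length_map] at hlength
  exact (WithBot.coe_le_coe.2 hlength).trans
    (coheight_map_atPrime_le_ringKrullDim_quotient m le_rfl)

end DepthBound

section StanleyReisner

open Finset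

attribute [local instance] MvPolynomial.gradedAlgebra

variable {σ : Type} (K : Type) [Field K]

/-- The Stanley–Reisner ideal of a simplicial complex `Δ`, the latter being encoded as a lower set
of finsets: the polynomials all of whose monomials are supported outside `Δ`. The complex need not
contain every vertex, and it may be void. -/
noncomputable def faceIdeal (Δ : LowerSet (Finset σ)) : Ideal (MvPolynomial σ K) :=
  restrictSupportIdeal K {u | u.support ∉ Δ}
    fun _ _ huv hu h => hu (Δ.lower (Finsupp.support_mono huv) h)

/-- The star of `A` in the simplicial complex `Δ`. The deletion of `A`, consisting of the faces
which do not contain `A`, is `Δ.erase A`. -/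
def starComplex [DecidableEq σ] (Δ : LowerSet (Finset σ)) (A : Finset σ) :
    LowerSet (Finset σ) where
  carrier := {F | F ∪ A ∈ Δ}
  lower' _ _ hle hF := Δ.lower (union_subset_union_left hle) hF

variable {K} {Δ : LowerSet (Finset σ)} {A F : Finset σ}

lemma mem_faceIdeal {f : MvPolynomial σ K} :
    f ∈ faceIdeal K Δ ↔ ∀ u ∈ f.support, u.support ∉ Δ :=
  Iff.rfl

lemma mem_starComplex [DecidableEq σ] : F ∈ starComplex Δ A ↔ F ∪ A ∈ Δ :=
  Iff.rfl

lemma mem_erase_iff_not_subset : F ∈ Δ.erase A ↔ F ∈ Δ ∧ ¬ A ⊆ F :=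
  Iff.rfl

lemma faceIdeal_bot : faceIdeal K (⊥ : LowerSet (Finset σ)) = ⊤ :=
  eq_top_iff.2 fun _ _ => mem_faceIdeal.2 fun _ _ => LowerSet.notMem_bot

lemma faceIdeal_anti {Δ' : LowerSet (Finset σ)} (h : Δ ≤ Δ') :
    faceIdeal K Δ' ≤ faceIdeal K Δ :=
  fun _ hf _ hu hmem => hf hu (h hmem)

lemma faceIdeal_Iic_empty : faceIdeal K (LowerSet.Iic (∅ : Finset σ)) = idealOfVars σ K := by
  ext f
  rw [← pow_one (idealOfVars σ K), mem_pow_idealOfVars_iff, mem_faceIdeal]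
  simp [Nat.one_le_iff_ne_zero, Finsupp.degree_eq_zero_iff]

lemma faceIdeal_le_idealOfVars (h : ∅ ∈ Δ) : faceIdeal K Δ ≤ idealOfVars σ K :=
  faceIdeal_Iic_empty (K := K) (σ := σ) ▸ faceIdeal_anti (LowerSet.Iic_le.2 h)

lemma sqMon_eq_monomial (A : Finset σ) :
    sqMon K A = monomial (Finsupp.indicator A fun _ _ => 1) 1 := by
  classical
  simpa [sqMon] using prod_X_pow (R := K) (fun _ => 1) A

lemma support_indicator_one (A : Finset σ) :
    (Finsupp.indicator A fun _ _ => 1 : σ →₀ ℕ).support = A := by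
  classical
  ext i
  simp [Finsupp.indicator_apply]

lemma sqMon_mem_faceIdeal : sqMon K A ∈ faceIdeal K Δ ↔ A ∉ Δ := by
  classical
  simp [mem_faceIdeal, sqMon_eq_monomial, support_monomial, support_indicator_one]

lemma sqMon_mul_mem_faceIdeal [DecidableEq σ] {h : MvPolynomial σ K} :
    sqMon K A * h ∈ faceIdeal K Δ ↔ h ∈ faceIdeal K (starComplex Δ A) := by
  have hsupport : (sqMon K A * h).support =
      h.support.map (addLeftEmbedding (Finsupp.indicator A fun _ _ => 1)) := by
    rw [sqMon_eq_monomial]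
    exact AddMonoidAlgebra.support_coeff_single_mul h _ (by simp) _
  simp only [mem_faceIdeal, hsupport, forall_mem_map, addLeftEmbedding_apply, mem_starComplex,
    Finsupp.support_add_eq_union, support_indicator_one, union_comm A]

lemma sqMon_dvd_monomial {u : σ →₀ ℕ} (hA : A ⊆ u.support) (a : K) :
    sqMon K A ∣ monomial u a := by
  classical
  rw [sqMon_eq_monomial, monomial_dvd_monomial, Finsupp.le_def]
  refine ⟨.inr fun i => ?_, one_dvd _⟩
  rw [Finsupp.indicator_apply]
  split_ifs with hi
  · exact Nat.one_le_iff_ne_zero.2 (Finsupp.mem_support_iff.1 (hA hi))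
  · exact Nat.zero_le _

variable (K) in
lemma faceIdeal_eq_span (Δ : LowerSet (Finset σ)) :
    faceIdeal K Δ = Ideal.span (sqMon K '' {F | F ∉ Δ}) := by
  refine le_antisymm (fun f hf => ?_) (Ideal.span_le.2 ?_)
  · rw [f.as_sum]
    exact Ideal.sum_mem _ fun u hu => Ideal.mem_of_dvd _ (sqMon_dvd_monomial subset_rfl _)
      (Ideal.subset_span ⟨u.support, hf hu, rfl⟩)
  · rintro _ ⟨F, hF, rfl⟩
    exact sqMon_mem_faceIdeal.2 hF

lemma faceIdeal_sup_span_sqMon (Δ : LowerSet (Finset σ)) (A : Finset σ) :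
    faceIdeal K Δ ⊔ Ideal.span {sqMon K A} = faceIdeal K (Δ.erase A) := by
  refine le_antisymm (sup_le (faceIdeal_anti LowerSet.erase_le) ?_) ?_
  · rw [Ideal.span_singleton_le_iff_mem, sqMon_mem_faceIdeal]
    exact fun h => h.2 (subset_refl A)
  · rw [faceIdeal_eq_span, Ideal.span_le]
    rintro _ ⟨F, hF, rfl⟩
    by_cases hA : A ⊆ F
    · exact Ideal.mem_sup_right (Ideal.mem_span_singleton.2 (prod_dvd_prod_of_subset _ _ _ hA))
    · exact Ideal.mem_sup_left (sqMon_mem_faceIdeal.2 fun h => hF ⟨h, hA⟩)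

lemma isHomogeneous_faceIdeal (Δ : LowerSet (Finset σ)) :
    (faceIdeal K Δ).IsHomogeneous (homogeneousSubmodule σ K) := by
  intro d f hf
  have hcomponent : homogeneousComponent d f ∈ faceIdeal K Δ := by
    refine mem_faceIdeal.2 fun u hu => ?_
    rw [support_homogeneousComponent] at hu
    exact hf (mem_filter.1 hu).1
  rwa [← decomposition.decompose'_apply] at hcomponent

lemma faceIdeal_Iic_eq_ker (V : Finset σ) :
    faceIdeal K (LowerSet.Iic V) =
      RingHom.ker (killCompl (R := K) (Subtype.val_injective (p := (· ∈ V)))) := by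
  ext f
  classical
  rw [mem_faceIdeal, RingHom.mem_ker, MvPolynomial.ext_iff]
  simp only [coeff_killCompl, coeff_zero, LowerSet.mem_Iic_iff, mem_support_iff]
  constructor
  · intro h u
    by_contra hu
    refine h _ hu fun i hi => ?_
    obtain ⟨j, -, rfl⟩ := mem_image.1 (Finsupp.mapDomain_support hi)
    exact j.2
  · intro h u hu huV
    refine hu ?_
    rw [← u.mapDomain_comapDomain _ Subtype.val_injective fun i hi => ⟨⟨i, huV hi⟩, rfl⟩]
    exact h _

instance isPrime_faceIdeal_Iic (V : Finset σ) : (faceIdeal K (LowerSet.Iic V)).IsPrime := by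
  rw [faceIdeal_Iic_eq_ker]
  exact RingHom.ker_isPrime _

instance isPrime_idealOfVars : (idealOfVars σ K).IsPrime :=
  faceIdeal_Iic_empty (K := K) (σ := σ) ▸ isPrime_faceIdeal_Iic ∅

lemma ringKrullDim_quotient_faceIdeal_Iic (V : Finset σ) :
    ringKrullDim (MvPolynomial σ K ⧸ faceIdeal K (LowerSet.Iic V)) = #V := by
  have hsurj : Function.Surjective (killCompl (R := K) (Subtype.val_injective (p := (· ∈ V)))) :=
    fun f => ⟨_, killCompl_rename_app _ f⟩
  rw [faceIdeal_Iic_eq_ker]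
  refine (ringKrullDim_eq_of_ringEquiv (RingHom.quotientKerEquivOfSurjective hsurj)).trans ?_
  simp [MvPolynomial.ringKrullDim_of_isNoetherianRing, ringKrullDim_eq_zero_of_field]

end StanleyReisner

section VertexDecomposable

open Finset

variable {σ : Type} [DecidableEq σ] {Δ : LowerSet (Finset σ)} {A F V : Finset σ}

/-- Vertex decomposability of a not necessarily pure simplicial complex, in the sense of
Björner–Wachs: `x` is a shedding vertex if every facet of its deletion is a facet of the complex.
The link of `x` is replaced by its star, which is a cone over it; so no vertex is ever removed from
the ambient vertex set. -/
inductive IsVertexDecomposable : LowerSet (Finset σ) → Prop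
  | void : IsVertexDecomposable ⊥
  | simplex (V : Finset σ) : IsVertexDecomposable (LowerSet.Iic V)
  | of_shedding {Δ : LowerSet (Finset σ)} (x : σ)
      (star : IsVertexDecomposable (starComplex Δ {x}))
      (deletion : IsVertexDecomposable (Δ.erase {x}))
      (shedding : ∀ F, Maximal (· ∈ Δ.erase {x}) F → Maximal (· ∈ Δ) F) :
      IsVertexDecomposable Δ

lemma maximal_mem_starComplex_iff :
    Maximal (· ∈ starComplex Δ A) F ↔ Maximal (· ∈ Δ) F ∧ A ⊆ F := by
  have hmem (G : Finset σ) (hG : G ∈ Δ) (hAG : A ⊆ G) : G ∈ starComplex Δ A := by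
    rwa [mem_starComplex, union_eq_left.2 hAG]
  have hle : starComplex Δ A ≤ Δ := fun G hG => Δ.lower subset_union_left hG
  refine ⟨fun hF => ?_, fun ⟨hF, hAF⟩ => ⟨hmem F hF.prop hAF, fun G hG => hF.2 (hle hG)⟩⟩
  have hAF : A ⊆ F := union_eq_left.1 <| subset_antisymm
    (hF.le_of_ge (hmem _ hF.prop subset_union_right) subset_union_left) subset_union_left
  exact ⟨⟨hle hF.prop, fun G hG hFG => hF.2 (hmem G hG (hAF.trans hFG)) hFG⟩, hAF⟩

lemma starComplex_starComplex (Δ : LowerSet (Finset σ)) (A B : Finset σ) :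
    starComplex (starComplex Δ A) B = starComplex Δ (B ∪ A) :=
  SetLike.ext fun F => by simp only [mem_starComplex, union_assoc]

lemma starComplex_inf_Iic_erase_singleton {x : σ} (hx : x ∉ A) :
    (starComplex (Δ ⊓ LowerSet.Iic V) A).erase {x} =
      starComplex (Δ ⊓ LowerSet.Iic (V.erase x)) A := by
  refine SetLike.ext fun F => ?_
  simp only [mem_erase_iff_not_subset, mem_starComplex, LowerSet.mem_inf_iff,
    LowerSet.mem_Iic_iff, singleton_subset_iff, subset_erase, mem_union, hx, or_false, and_assoc]

lemma starComplex_eq_Iic_of_maximal (hF : Maximal (· ∈ Δ) F) :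
    starComplex Δ F = LowerSet.Iic F := by
  refine SetLike.ext fun G => ?_
  rw [mem_starComplex, LowerSet.mem_Iic_iff]
  exact ⟨fun hG => subset_union_left.trans (hF.le_of_ge hG subset_union_right),
    fun hG => by simpa [union_eq_right.2 hG] using hF.prop⟩

lemma Iic_erase_singleton (V : Finset σ) (a : σ) :
    (LowerSet.Iic V).erase {a} = LowerSet.Iic (V.erase a) := by
  refine SetLike.ext fun F => ?_
  rw [mem_erase_iff_not_subset, LowerSet.mem_Iic_iff, LowerSet.mem_Iic_iff, singleton_subset_iff]
  exact subset_erase.symm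

lemma exists_eq_erase_of_maximal_mem_Iic_erase (hF : Maximal (· ∈ (LowerSet.Iic V).erase A) F) :
    ∃ a ∈ A, F = V.erase a := by
  obtain ⟨hFV, hAF⟩ := hF.prop
  obtain ⟨a, haA, haF⟩ := not_subset.1 hAF
  exact ⟨a, haA, hF.eq_of_le ⟨erase_subset a V, fun h => notMem_erase a V (h haA)⟩
    (subset_erase.2 ⟨hFV, haF⟩)⟩

lemma starComplex_Iic_erase_insert {a : σ} (haA : a ∉ A) (haV : a ∈ V) :
    starComplex ((LowerSet.Iic V).erase (insert a A)) {a} = (LowerSet.Iic V).erase A := by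
  refine SetLike.ext fun F => ?_
  rw [mem_starComplex, union_singleton, mem_erase_iff_not_subset, mem_erase_iff_not_subset,
    insert_subset_insert_iff haA, LowerSet.mem_Iic_iff, LowerSet.mem_Iic_iff]
  exact and_congr_left' (insert_subset_iff.trans (and_iff_right haV))

lemma Iic_erase_insert_erase_singleton (a : σ) :
    ((LowerSet.Iic V).erase (insert a A)).erase {a} = LowerSet.Iic (V.erase a) := by
  refine SetLike.ext fun F => ?_
  simp only [mem_erase_iff_not_subset, LowerSet.mem_Iic_iff, singleton_subset_iff, subset_erase]
  grind

lemma isVertexDecomposable_Iic_erase (hAV : A ⊆ V) :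
    IsVertexDecomposable ((LowerSet.Iic V).erase A) := by
  induction A using Finset.induction_on with
  | empty =>
    have hvoid : (LowerSet.Iic V).erase (∅ : Finset σ) = ⊥ := by
      refine SetLike.ext fun F => ?_
      simp [mem_erase_iff_not_subset]
    exact hvoid ▸ .void
  | insert a A haA ih =>
    obtain ⟨haV, hAV⟩ := insert_subset_iff.1 hAV
    refine .of_shedding a ?_ ?_ fun F hF => ?_
    · rw [starComplex_Iic_erase_insert haA haV]
      exact ih hAV
    · rw [Iic_erase_insert_erase_singleton]
      exact .simplex _
    · rw [Iic_erase_insert_erase_singleton] at hF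
      obtain rfl : F = V.erase a := hF.eq_of_le (LowerSet.mem_Iic_iff.2 le_rfl) hF.prop
      refine ⟨⟨erase_subset a V, fun h => notMem_erase a V (h (mem_insert_self a A))⟩,
        fun G hG hle => ?_⟩
      have haG : a ∉ G := fun haG => hG.2 <| insert_subset haG fun b hb =>
        hle (mem_erase.2 ⟨ne_of_mem_of_not_mem hb haA, hAV hb⟩)
      exact subset_erase.2 ⟨hG.1, haG⟩

end VertexDecomposable

section Depth

open Finset

variable {σ : Type} {K : Type} [Field K] {Δ : LowerSet (Finset σ)} {F V : Finset σ} {d : ℕ}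

lemma isAssociatedPrime_faceIdeal_Iic [Finite σ] (hF : Maximal (· ∈ Δ) F) :
    IsAssociatedPrime (faceIdeal K (LowerSet.Iic F)) (MvPolynomial σ K ⧸ faceIdeal K Δ) := by
  classical
  refine isAssociatedPrime_iff.2 ⟨isPrime_faceIdeal_Iic F, Submodule.Quotient.mk (sqMon K F), ?_⟩
  ext h
  rw [Submodule.mem_colon_singleton, Submodule.mem_bot, ← Submodule.Quotient.mk_smul,
    Submodule.Quotient.mk_eq_zero, smul_eq_mul, mul_comm, sqMon_mul_mem_faceIdeal,
    starComplex_eq_Iic_of_maximal hF]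

lemma top_ne_smul_top_quotient {R : Type*} [CommRing R] {I J m : Ideal R} (hm : m ≠ ⊤)
    (hJ : J ≤ m) (hI : I ≤ m) : (⊤ : Submodule R (R ⧸ J)) ≠ I • ⊤ := by
  intro h
  rw [Ideal.smul_top_eq_map, eq_comm, Submodule.restrictScalars_eq_top_iff] at h
  refine hm (top_le_iff.1 ?_)
  rw [← Ideal.comap_top (f := Ideal.Quotient.mk J), ← h, Ideal.Quotient.algebraMap_eq,
    Ideal.comap_map_quotientMk]
  exact sup_le hJ hI

lemma length_le_card_of_maximal [Finite σ] (hF : Maximal (· ∈ Δ) F) {rs : List (MvPolynomial σ K)}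
    (hmem : ∀ r ∈ rs, r ∈ idealOfVars σ K)
    (hrs : IsWeaklyRegular (MvPolynomial σ K ⧸ faceIdeal K Δ) rs) : rs.length ≤ #F := by
  have hle : faceIdeal K (LowerSet.Iic F) ≤ idealOfVars σ K :=
    faceIdeal_le_idealOfVars (LowerSet.mem_Iic_iff.2 (empty_subset F))
  have h := length_le_ringKrullDim_quotient_of_isAssociatedPrime hrs hmem
    (isAssociatedPrime_faceIdeal_Iic hF) hle
  rw [ringKrullDim_quotient_faceIdeal_Iic] at h
  exact_mod_cast h

section Fintype

variable [Fintype σ]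

variable (σ K) in
/-- The elementary symmetric polynomials of degrees `d, d - 1, …, 1`, in this order. -/
noncomputable def esymmList (d : ℕ) : List (MvPolynomial σ K) :=
  ((List.range d).map fun j => esymm σ K (j + 1)).reverse

lemma esymmList_succ (d : ℕ) : esymmList σ K (d + 1) = esymm σ K (d + 1) :: esymmList σ K d := by
  simp [esymmList, List.range_succ]

lemma length_esymmList (d : ℕ) : (esymmList σ K d).length = d := by
  simp [esymmList]

lemma exists_eq_esymm_of_mem_esymmList {d : ℕ} {r : MvPolynomial σ K} (hr : r ∈ esymmList σ K d) :
    ∃ j, r = esymm σ K (j + 1) := by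
  obtain ⟨j, -, rfl⟩ := List.mem_map.1 (List.mem_reverse.1 hr)
  exact ⟨j, rfl⟩

lemma mem_idealOfVars_of_mem_esymmList {d : ℕ} {r : MvPolynomial σ K}
    (hr : r ∈ esymmList σ K d) : r ∈ idealOfVars σ K := by
  obtain ⟨j, rfl⟩ := exists_eq_esymm_of_mem_esymmList hr
  refine Ideal.sum_mem _ fun t ht => ?_
  obtain ⟨i, hi⟩ : t.Nonempty := card_pos.1 ((mem_powersetCard.1 ht).2 ▸ j.succ_pos)
  exact Ideal.mem_of_dvd _ (dvd_prod_of_mem _ hi) (Ideal.subset_span ⟨i, rfl⟩)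

lemma isHomogeneous_esymm (j : ℕ) : (esymm σ K j).IsHomogeneous j := by
  refine IsHomogeneous.sum _ _ _ fun t ht => ?_
  have := IsHomogeneous.prod (R := K) t X (fun _ => 1) fun i _ => isHomogeneous_X K i
  simpa [(mem_powersetCard.1 ht).2] using this

lemma esymm_card_sub_sqMon_mem_faceIdeal_Iic (V : Finset σ) :
    esymm σ K #V - sqMon K V ∈ faceIdeal K (LowerSet.Iic V) := by
  classical
  rw [esymm, ← add_sum_erase _ _ (mem_powersetCard.2 ⟨subset_univ V, rfl⟩), sqMon,
    add_sub_cancel_left]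
  refine Ideal.sum_mem _ fun F hF => sqMon_mem_faceIdeal.2 fun hFV => ?_
  obtain ⟨hne, hF⟩ := mem_erase.1 hF
  exact hne (eq_of_subset_of_card_le hFV (mem_powersetCard.1 hF).2.ge)

lemma faceIdeal_Iic_sup_span_esymm (V : Finset σ) :
    faceIdeal K (LowerSet.Iic V) ⊔ Ideal.span {esymm σ K #V} =
      faceIdeal K ((LowerSet.Iic V).erase V) := by
  rw [← faceIdeal_sup_span_sqMon]
  have hmem := esymm_card_sub_sqMon_mem_faceIdeal_Iic (K := K) V
  refine le_antisymm (sup_le le_sup_left ?_) (sup_le le_sup_left ?_) <;>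
    rw [Ideal.span_singleton_le_iff_mem, mem_sup_span_singleton_iff]
  · exact ⟨1, by simpa using hmem⟩
  · exact ⟨1, by simpa using neg_mem hmem⟩

attribute [local instance] MvPolynomial.gradedAlgebra in
lemma isWeaklyRegular_quotient_faceIdeal_Iic
    (hboundary : ∀ V : Finset σ, #V = d + 1 → IsWeaklyRegular
      (MvPolynomial σ K ⧸ faceIdeal K ((LowerSet.Iic V).erase V)) (esymmList σ K d))
    (hV : d + 1 ≤ #V) :
    IsWeaklyRegular (MvPolynomial σ K ⧸ faceIdeal K (LowerSet.Iic V)) (esymmList σ K (d + 1)) := by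
  classical
  obtain ⟨n, hn⟩ : ∃ n, #V = n := ⟨_, rfl⟩
  rw [hn] at hV
  induction n, hV using Nat.le_induction generalizing V with
  | base =>
    rw [esymmList_succ, ← hn, isWeaklyRegular_quotient_cons_iff, faceIdeal_Iic_sup_span_esymm]
    refine ⟨fun g hg => ((isPrime_faceIdeal_Iic V).mem_or_mem hg).resolve_left fun he => ?_,
      hboundary V hn⟩
    have hmem := sub_mem he (esymm_card_sub_sqMon_mem_faceIdeal_Iic V)
    rw [sub_sub_cancel, sqMon_mem_faceIdeal] at hmem
    exact hmem (LowerSet.mem_Iic_iff.2 le_rfl)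
  | succ n _ ih =>
    obtain ⟨a, ha⟩ : V.Nonempty := card_pos.1 (by omega)
    have hX : X a = sqMon K {a} := (prod_singleton _ a).symm
    refine isWeaklyRegular_quotient_of_sup_of_homogeneous (isHomogeneous_faceIdeal _) one_pos
      (isHomogeneous_X K a) (fun g hg => ?_) (fun r hr => ?_) ?_
    · refine ((isPrime_faceIdeal_Iic V).mem_or_mem hg).resolve_left fun hmem => ?_
      rw [hX, sqMon_mem_faceIdeal] at hmem
      exact hmem (LowerSet.mem_Iic_iff.2 (singleton_subset_iff.2 ha))
    · obtain ⟨j, rfl⟩ := exists_eq_esymm_of_mem_esymmList hr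
      exact ⟨_, isHomogeneous_esymm _⟩
    · rw [hX, faceIdeal_sup_span_sqMon, Iic_erase_singleton]
      exact ih (by rw [card_erase_of_mem ha]; omega)

variable [DecidableEq σ]

theorem IsVertexDecomposable.isWeaklyRegular_esymmList (hΔ : IsVertexDecomposable Δ)
    (hd : ∀ F, Maximal (· ∈ Δ) F → d ≤ #F) :
    IsWeaklyRegular (MvPolynomial σ K ⧸ faceIdeal K Δ) (esymmList σ K d) := by
  induction d generalizing Δ with
  | zero => exact .nil _ _
  | succ d ihd =>
    induction hΔ with
    | void =>
      have : Subsingleton (MvPolynomial σ K ⧸ faceIdeal K (⊥ : LowerSet (Finset σ))) :=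
        Ideal.Quotient.subsingleton_iff.2 faceIdeal_bot
      exact isWeaklyRegular_of_subsingleton _
    | simplex V =>
      refine isWeaklyRegular_quotient_faceIdeal_Iic (fun W hW => ?_) (hd V isGreatest_Iic.maximal)
      refine ihd (isVertexDecomposable_Iic_erase subset_rfl) fun F hF => ?_
      obtain ⟨a, ha, rfl⟩ := exists_eq_erase_of_maximal_mem_Iic_erase hF
      rw [card_erase_of_mem ha, hW, Nat.add_sub_cancel]
    | of_shedding x _ _ shedding ihstar ihdeletion =>
      refine isWeaklyRegular_quotient_of_colon_of_sup (fun h => sqMon_mul_mem_faceIdeal)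
        (ihstar fun F hF => hd F (maximal_mem_starComplex_iff.1 hF).1) ?_
      rw [faceIdeal_sup_span_sqMon]
      exact ihdeletion fun F hF => hd F (shedding F hF)

end Fintype

theorem IsVertexDecomposable.polyDepth_faceIdeal [Finite σ] [DecidableEq σ]
    (hΔ : IsVertexDecomposable Δ)
    (hF : Maximal (· ∈ Δ) F) (hmin : ∀ F', Maximal (· ∈ Δ) F' → #F ≤ #F') :
    polyDepth K (faceIdeal K Δ) = #F := by
  cases nonempty_fintype σ
  have hle : faceIdeal K Δ ≤ idealOfVars σ K :=
    faceIdeal_le_idealOfVars (Δ.lower (empty_subset F) hF.prop)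
  have hreg := hΔ.isWeaklyRegular_esymmList (K := K) hmin
  refine IsGreatest.csSup_eq ⟨⟨_, length_esymmList _, fun _ => mem_idealOfVars_of_mem_esymmList,
    hreg, top_ne_smul_top_quotient isPrime_idealOfVars.ne_top hle <|
      Ideal.span_le.2 fun _ => mem_idealOfVars_of_mem_esymmList⟩, ?_⟩
  rintro _ ⟨rs, rfl, hmem, hrs⟩
  exact length_le_card_of_maximal hF hmem hrs.toIsWeaklyRegular

end Depth

section Matchings

open Finset

variable {σ : Type} {G : SimpleGraph σ} {k : ℕ} {F F' : Finset σ} {K : Type} [Field K]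

/-- `F` contains the vertex set of a `k`-matching of `G`; equivalently, the subgraph induced by `F`
has matching number at least `k`. -/
def HasMatching (G : SimpleGraph σ) (k : ℕ) (F : Finset σ) : Prop :=
  ∃ M : Finset (Sym2 σ), IsMatchingSet G M ∧ #M = k ∧ matchVerts M ⊆ F

lemma hasMatching_zero : HasMatching G 0 F :=
  ⟨∅, by simp [IsMatchingSet], rfl, by simp [matchVerts]⟩

lemma HasMatching.mono (hF : HasMatching G k F) (h : F ⊆ F') : HasMatching G k F' :=
  hF.imp fun _ hM => ⟨hM.1, hM.2.1, hM.2.2.trans (coe_subset.2 h)⟩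

lemma hasMatching_succ_iff [DecidableEq σ] :
    HasMatching G (k + 1) F ↔
      ∃ i ∈ F, ∃ j ∈ F, G.Adj i j ∧ HasMatching G k ((F.erase i).erase j) := by
  constructor
  · rintro ⟨M, hM, hcard, hMF⟩
    obtain ⟨e, he⟩ : M.Nonempty := card_pos.1 (by omega)
    induction e with | _ i j =>
    refine ⟨i, hMF ⟨_, he, by simp⟩, j, hMF ⟨_, he, by simp⟩, hM.1 he, M.erase s(i, j),
      ⟨(coe_subset.2 (erase_subset _ _)).trans hM.1,
        fun e he f hf => hM.2 e (mem_of_mem_erase he) f (mem_of_mem_erase hf)⟩,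
      by rw [card_erase_of_mem he, hcard, Nat.add_sub_cancel], ?_⟩
    rintro v ⟨f, hf, hv⟩
    obtain ⟨hne, hf⟩ := mem_erase.1 hf
    have hvij := hM.2 f hf _ he hne v hv
    rw [Sym2.mem_iff, not_or] at hvij
    simpa [hvij] using hMF ⟨f, hf, hv⟩
  · rintro ⟨i, hi, j, hj, hij, M, hM, hcard, hMF⟩
    have hdisj : ∀ e ∈ M, ∀ v ∈ e, v ∉ s(i, j) := by
      intro e he v hv hvij
      have := hMF ⟨e, he, hv⟩
      aesop
    have hnot : s(i, j) ∉ M := fun h => hdisj _ h i (by simp) (by simp)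
    refine ⟨insert s(i, j) M, ⟨?_, ?_⟩, by rw [card_insert_of_notMem hnot, hcard], ?_⟩
    · rw [coe_insert, Set.insert_subset_iff]
      exact ⟨hij, hM.1⟩
    · intro e he f hf hef v hve hvf
      rcases mem_insert.1 he with rfl | he <;> rcases mem_insert.1 hf with rfl | hf
      exacts [hef rfl, hdisj f hf v hvf hve, hdisj e he v hve hvf, hM.2 e he f hf hef v hve hvf]
    · rintro v ⟨e, he, hv⟩
      rcases mem_insert.1 he with rfl | he
      · rcases Sym2.mem_iff.1 hv with rfl | rfl <;> assumption
      · exact mem_of_mem_erase (mem_of_mem_erase (hMF ⟨e, he, hv⟩))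

lemma HasMatching.exists_subset_card_eq (hF : HasMatching G k F) :
    ∃ F' ⊆ F, #F' = 2 * k ∧ HasMatching G k F' := by
  classical
  obtain ⟨M, hM, rfl, hMF⟩ := hF
  have hdisj : (M : Set (Sym2 σ)).PairwiseDisjoint Sym2.toFinset := fun e he f hf hef =>
    disjoint_left.2 fun v hv hv' =>
      hM.2 e he f hf hef v (Sym2.mem_toFinset.1 hv) (Sym2.mem_toFinset.1 hv')
  have hcard : ∀ e ∈ M, #e.toFinset = 2 := fun e he =>
    Sym2.card_toFinset_of_not_isDiag e (G.not_isDiag_of_mem_edgeSet (hM.1 he))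
  have hmem (v : σ) : v ∈ M.biUnion Sym2.toFinset ↔ v ∈ matchVerts M := by
    simp [matchVerts]
  exact ⟨M.biUnion Sym2.toFinset, fun v hv => hMF ((hmem v).1 hv),
    by rw [card_biUnion hdisj, sum_const_nat hcard, mul_comm], M, hM, rfl,
    fun v hv => mem_coe.2 ((hmem v).2 hv)⟩

lemma HasMatching.two_mul_le_card (hF : HasMatching G k F) : 2 * k ≤ #F := by
  obtain ⟨F', hF', hcard, -⟩ := hF.exists_subset_card_eq
  exact hcard ▸ card_le_card hF'

lemma exists_adj_of_mem_edgeIdeal {f : MvPolynomial σ K} (hf : f ∈ edgeIdeal K G) {u : σ →₀ ℕ}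
    (hu : u ∈ f.support) : ∃ i ∈ u.support, ∃ j ∈ u.support, G.Adj i j := by
  classical
  let Δ : LowerSet (Finset σ) := ⟨{F | ¬ ∃ i ∈ F, ∃ j ∈ F, G.Adj i j}, fun F F' hle hF h =>
    hF <| by obtain ⟨i, hi, j, hj, hij⟩ := h; exact ⟨i, hle hi, j, hle hj, hij⟩⟩
  have hle : edgeIdeal K G ≤ faceIdeal K Δ := by
    refine Ideal.span_le.2 ?_
    rintro _ ⟨i, j, hij, rfl⟩
    rw [← prod_pair hij.ne]
    exact sqMon_mem_faceIdeal.2 fun h => h ⟨i, by simp, j, by simp, hij⟩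
  exact not_not.1 (hle hf hu)

lemma hasMatching_support_of_mem_edgeIdeal_pow {f : MvPolynomial σ K}
    (hf : f ∈ edgeIdeal K G ^ k) {u : σ →₀ ℕ} (hu : u ∈ f.support) (hsq : ∀ i, u i ≤ 1) :
    HasMatching G k u.support := by
  classical
  induction k generalizing f u with
  | zero => exact hasMatching_zero
  | succ k ih =>
    rw [pow_succ'] at hf
    induction hf using Submodule.mul_induction_on' with
    | mem_mul_mem p hp q hq =>
      obtain ⟨v, hv, w, hw, rfl⟩ := mem_add.1 (support_mul p q hu)
      obtain ⟨i, hi, j, hj, hij⟩ := exists_adj_of_mem_edgeIdeal hp hv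
      have hwv : ∀ a ∈ v.support, a ∉ w.support := by
        intro a
        have := hsq a
        simp only [Finsupp.add_apply, Finsupp.mem_support_iff] at this ⊢
        omega
      rw [Finsupp.support_add_eq_union]
      refine hasMatching_succ_iff.2 ⟨i, mem_union_left _ hi, j, mem_union_left _ hj, hij,
        (ih hq hw fun a => (Nat.le_add_left _ _).trans (hsq a)).mono fun a ha => ?_⟩
      simp only [mem_erase, mem_union]
      exact ⟨fun h => hwv j hj (h ▸ ha), fun h => hwv i hi (h ▸ ha), .inr ha⟩
    | add p _ q _ hp hq =>
      rcases mem_union.1 (support_add hu) with h | h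
      exacts [hp h, hq h]

lemma sqMon_mem_edgeIdeal_pow_iff : sqMon K F ∈ edgeIdeal K G ^ k ↔ HasMatching G k F := by
  classical
  refine ⟨fun hF => ?_, fun hF => ?_⟩
  · rw [sqMon_eq_monomial] at hF
    rw [← support_indicator_one F]
    refine hasMatching_support_of_mem_edgeIdeal_pow hF (by simp [support_monomial]) fun i => ?_
    rw [Finsupp.indicator_apply]
    split_ifs <;> omega
  · induction k generalizing F with
    | zero => simp
    | succ k ih =>
      obtain ⟨i, hi, j, hj, hij, h⟩ := hasMatching_succ_iff.1 hF
      rw [sqMon, ← mul_prod_erase F X hi, ← mul_prod_erase _ X (mem_erase.2 ⟨hij.ne', hj⟩),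
        ← mul_assoc, pow_succ']
      exact Ideal.mul_mem_mul (Ideal.subset_span ⟨i, j, hij, rfl⟩) (ih h)

/-- The simplicial complex of the vertex sets of `G` which contain no `k`-matching. It is the
complex whose Stanley–Reisner ideal is the `k`-th squarefree power of the edge ideal. -/
def matchingFreeComplex (G : SimpleGraph σ) (k : ℕ) : LowerSet (Finset σ) where
  carrier := {F | ¬ HasMatching G k F}
  lower' _ _ hle hF h := hF (h.mono hle)

lemma mem_matchingFreeComplex : F ∈ matchingFreeComplex G k ↔ ¬ HasMatching G k F :=
  Iff.rfl

variable (K) in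
lemma sqfreePower_edgeIdeal (G : SimpleGraph σ) (k : ℕ) :
    sqfreePower K (edgeIdeal K G) k = faceIdeal K (matchingFreeComplex G k) := by
  rw [faceIdeal_eq_span, sqfreePower]
  congr 1
  ext m
  simp only [Set.mem_image, Set.mem_ofPred_eq, mem_matchingFreeComplex, not_not]
  exact exists_congr fun F => ⟨fun ⟨h, hm⟩ => ⟨sqMon_mem_edgeIdeal_pow_iff.1 (h ▸ hm), h.symm⟩,
    fun ⟨hF, h⟩ => ⟨h.symm, h ▸ sqMon_mem_edgeIdeal_pow_iff.2 hF⟩⟩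

lemma HasMatching.indeg_faceIdeal_matchingFreeComplex (hF : HasMatching G k F) :
    indeg K (faceIdeal K (matchingFreeComplex G k)) = 2 * k := by
  simp only [indeg, sqMon_mem_faceIdeal, mem_matchingFreeComplex, not_not]
  refine IsLeast.csInf_eq ⟨?_, ?_⟩
  · obtain ⟨F', -, hcard, hF'⟩ := hF.exists_subset_card_eq
    exact ⟨F', hcard, hF'⟩
  · rintro _ ⟨F', rfl, hF'⟩
    exact hF'.two_mul_le_card

end Matchings

section ClusterGraphs

open Finset

variable {σ ι : Type} [DecidableEq ι] (c : σ → ι) {A F F' V : Finset σ} {x : σ} {k : ℕ} {t : ι}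

/-- The cluster graph of a colouring of the vertices: the disjoint union of the complete graphs on
the colour classes. -/
def clusterGraph {σ ι : Type} (c : σ → ι) : SimpleGraph σ where
  Adj i j := i ≠ j ∧ c i = c j
  symm := ⟨fun _ _ h => ⟨h.1.symm, h.2.symm⟩⟩
  loopless := ⟨fun _ h => h.1 rfl⟩

/-- The number of vertices of colour `t` in `F`. -/
def colorCard (F : Finset σ) (t : ι) : ℕ := #{x ∈ F | c x = t}

lemma colorCard_mono (h : F ⊆ F') (t : ι) : colorCard c F t ≤ colorCard c F' t :=
  card_le_card (filter_subset_filter _ h)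

lemma colorCard_insert [DecidableEq σ] (hx : x ∉ F) (t : ι) :
    colorCard c (insert x F) t = colorCard c F t + if c x = t then 1 else 0 := by
  unfold colorCard
  rw [filter_insert]
  split_ifs with h
  · rw [card_insert_of_notMem (by simp [hx])]
  · rfl

lemma colorCard_lt_colorCard (hFV : F ⊆ V) (hxV : x ∈ V) (hxF : x ∉ F) :
    colorCard c F (c x) < colorCard c V (c x) :=
  card_lt_card <| (ssubset_iff_of_subset (filter_subset_filter _ hFV)).2
    ⟨x, mem_filter.2 ⟨hxV, rfl⟩, fun h => hxF (mem_filter.1 h).1⟩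

lemma exists_notMem_of_colorCard_lt (h : colorCard c F t < colorCard c F' t) :
    ∃ x ∈ F', x ∉ F ∧ c x = t := by
  obtain ⟨x, hx, hxF⟩ := exists_mem_notMem_of_card_lt_card h
  simp only [mem_filter, not_and] at hx hxF
  exact ⟨x, hx.1, fun h => hxF h hx.2, hx.2⟩

lemma colorCard_filter_mem [Fintype σ] (T : Finset ι) (t : ι) :
    colorCard c {x | c x ∈ T} t = if t ∈ T then colorCard c univ t else 0 := by
  rw [colorCard, filter_filter]
  split_ifs with h
  · exact congrArg card (filter_congr fun x _ => and_iff_right_of_imp fun hx => hx ▸ h)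
  · exact card_eq_zero.2 (filter_eq_empty_iff.2 fun x _ hx => h (hx.2 ▸ hx.1))

lemma noIsolated_clusterGraph [Fintype σ] (h : ∀ t, 1 < colorCard c univ t) :
    NoIsolated (clusterGraph c) := fun x => by
  obtain ⟨y, hy, hyx⟩ := exists_mem_ne (h (c x)) x
  exact ⟨y, hyx.symm, (mem_filter.1 hy).2.symm⟩

section Fintype

variable [Fintype ι]

lemma sum_colorCard (F : Finset σ) : ∑ t, colorCard c F t = #F :=
  (card_eq_sum_card_fiberwise fun _ _ => mem_univ _).symm

lemma exists_colorCard_univ_eq (a : ι → ℕ) :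
    ∃ c : Fin (∑ t, a t) → ι, ∀ t, colorCard c univ t = a t := by
  let e : Fin (∑ t, a t) ≃ Σ t, Fin (a t) :=
    (Fintype.equivFinOfCardEq (by simp [Fintype.card_sigma])).symm
  refine ⟨fun x => (e x).1, fun t => ?_⟩
  have hfiber : #{x | (e x).1 = t} = #{p : Σ t, Fin (a t) | p.1 = t} :=
    card_equiv e fun x => by simp
  rw [colorCard, hfiber, ← Fintype.card_subtype, Fintype.card_congr (Equiv.sigmaSubtype t),
    Fintype.card_fin]

/-- The matching number of the subgraph of `clusterGraph c` induced by `F`. -/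
def pairCount (F : Finset σ) : ℕ := ∑ t, colorCard c F t / 2

lemma pairCount_mono (h : F ⊆ F') : pairCount c F ≤ pairCount c F' :=
  sum_le_sum fun t _ => Nat.div_le_div_right (colorCard_mono c h t)

lemma pairCount_insert [DecidableEq σ] (hx : x ∉ F) :
    pairCount c (insert x F) = pairCount c F + colorCard c F (c x) % 2 := by
  have hsum : ∑ t ∈ univ.erase (c x), colorCard c (insert x F) t / 2 =
      ∑ t ∈ univ.erase (c x), colorCard c F t / 2 :=
    sum_congr rfl fun t ht => by
      rw [colorCard_insert c hx, if_neg (ne_of_mem_erase ht).symm, add_zero]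
  rw [pairCount, pairCount, ← add_sum_erase _ _ (mem_univ (c x)), hsum, colorCard_insert c hx,
    if_pos rfl, ← add_sum_erase _ (fun t => colorCard c F t / 2) (mem_univ (c x))]
  omega

lemma pairCount_erase_erase [DecidableEq σ] {i j : σ} (hi : i ∈ F) (hj : j ∈ F) (hij : i ≠ j)
    (hc : c i = c j) : pairCount c F = pairCount c ((F.erase i).erase j) + 1 := by
  have hj' : j ∈ F.erase i := mem_erase.2 ⟨hij.symm, hj⟩
  have hcount := colorCard_insert c (notMem_erase j (F.erase i)) (c j)
  rw [insert_erase hj', if_pos rfl] at hcount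
  conv_lhs => rw [← insert_erase hi, pairCount_insert c (notMem_erase i F), ← insert_erase hj',
    pairCount_insert c (notMem_erase j _), insert_erase hj', hc, hcount]
  omega

lemma pairCount_le_of_forall (h : ∀ x ∈ F, x ∉ A → colorCard c F (c x) = 1) :
    pairCount c F ≤ pairCount c A := by
  refine sum_le_sum fun t _ => ?_
  rcases le_or_gt (colorCard c F t) (colorCard c A t) with hle | hlt
  · exact Nat.div_le_div_right hle
  · obtain ⟨x, hxF, hxA, rfl⟩ := exists_notMem_of_colorCard_lt c hlt
    simp [h x hxF hxA]

lemma hasMatching_clusterGraph_iff : HasMatching (clusterGraph c) k F ↔ k ≤ pairCount c F := by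
  classical
  induction k generalizing F with
  | zero => exact iff_of_true hasMatching_zero (Nat.zero_le _)
  | succ k ih =>
    rw [hasMatching_succ_iff]
    constructor
    · rintro ⟨i, hi, j, hj, hij, h⟩
      rw [pairCount_erase_erase c hi hj hij.1 hij.2]
      exact Nat.succ_le_succ (ih.1 h)
    · intro hk
      obtain ⟨t, -, ht⟩ := exists_ne_zero_of_sum_ne_zero (s := univ)
        (f := fun t => colorCard c F t / 2) (Nat.ne_zero_of_lt hk)
      obtain ⟨i, hi, j, hj, hij⟩ := one_lt_card.1 (show 1 < colorCard c F t by omega)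
      obtain ⟨hiF, hci⟩ := mem_filter.1 hi
      obtain ⟨hjF, hcj⟩ := mem_filter.1 hj
      have hcij : c i = c j := hci.trans hcj.symm
      refine ⟨i, hiF, j, hjF, ⟨hij, hcij⟩, ih.2 ?_⟩
      rw [pairCount_erase_erase c hiF hjF hij hcij] at hk
      exact Nat.le_of_succ_le_succ hk

lemma matchNum_clusterGraph [Fintype σ] : matchNum (clusterGraph c) = pairCount c univ := by
  have h (k : ℕ) : (∃ M, IsMatchingSet (clusterGraph c) M ∧ #M = k) ↔ k ≤ pairCount c univ := by
    rw [← hasMatching_clusterGraph_iff]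
    simp [HasMatching]
  simp only [matchNum, h]
  exact csSup_Iic

lemma mem_matchingFreeComplex_clusterGraph_iff :
    F ∈ matchingFreeComplex (clusterGraph c) k ↔ pairCount c F < k := by
  rw [mem_matchingFreeComplex, hasMatching_clusterGraph_iff, not_le]

lemma exists_shedding (t₀ : ι) (hsmall : ∀ t ≠ t₀, colorCard c V t ≤ 2)
    (hlt : pairCount c A < pairCount c V) :
    ∃ x ∈ V, x ∉ A ∧ (Even (colorCard c V (c x)) ∨
      ∀ y ∈ V, y ∉ A → c y ≠ c x → colorCard c V (c y) = 1) := by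
  by_contra! hcon
  have hone : ∀ y ∈ V, y ∉ A → c y ≠ t₀ → colorCard c V (c y) = 1 := fun y hyV hyA hy => by
    have hodd := Nat.not_even_iff_odd.1 (hcon y hyV hyA).1
    have hle := hsmall (c y) hy
    grind
  refine hlt.not_ge (pairCount_le_of_forall c fun x hxV hxA => hone x hxV hxA fun hx => ?_)
  obtain ⟨-, y, hyV, hyA, hyx, hy⟩ := hcon x hxV hxA
  exact hy (hone y hyV hyA (hx ▸ hyx))

lemma maximal_mem_matchingFreeComplex_inf_Iic_iff [DecidableEq σ] :
    Maximal (· ∈ matchingFreeComplex (clusterGraph c) k ⊓ LowerSet.Iic V) F ↔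
      (pairCount c F < k ∧ F ⊆ V) ∧ ∀ x ∈ V, x ∉ F → k ≤ pairCount c (insert x F) := by
  refine (Finset.maximal_iff_forall_insert
    (P := (· ∈ matchingFreeComplex (clusterGraph c) k ⊓ LowerSet.Iic V))
    fun _ _ h hle => LowerSet.lower _ hle h).trans ?_
  simp only [LowerSet.mem_inf_iff, LowerSet.mem_Iic_iff, mem_matchingFreeComplex_clusterGraph_iff]
  refine and_congr_right fun hF => forall_congr' fun x => ?_
  rw [← not_lt]
  exact ⟨fun h hxV hxF hlt => h hxF ⟨hlt, insert_subset hxV hF.2⟩,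
    fun h hxF hlt => h (hlt.2 (mem_insert_self x F)) hxF hlt.1⟩

lemma maximal_of_maximal_mem_matchingFreeComplex_erase [DecidableEq σ] (hk : k ≤ pairCount c V)
    (hAF : A ⊆ F)
    (hx : Even (colorCard c V (c x)) ∨ ∀ y ∈ V, y ∉ A → c y ≠ c x → colorCard c V (c y) = 1)
    (hF : Maximal (· ∈ matchingFreeComplex (clusterGraph c) k ⊓ LowerSet.Iic (V.erase x)) F) :
    Maximal (· ∈ matchingFreeComplex (clusterGraph c) k ⊓ LowerSet.Iic V) F := by
  rw [maximal_mem_matchingFreeComplex_inf_Iic_iff] at hF ⊢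
  obtain ⟨⟨hFk, hFV⟩, hmax⟩ := hF
  refine ⟨⟨hFk, hFV.trans (erase_subset x V)⟩, fun y hyV hyF => ?_⟩
  obtain rfl | hyx := eq_or_ne y x
  swap
  · exact hmax y (mem_erase.2 ⟨hyx, hyV⟩) hyF
  -- Otherwise every vertex outside `insert y F` completes a pair, but `y` does not.
  by_contra! hlt
  replace hFV := hFV.trans (erase_subset y V)
  rw [pairCount_insert c hyF] at hlt
  have hodd : ∀ z ∈ V, z ∉ insert y F → colorCard c F (c y) % 2 = 0 ∧
      colorCard c F (c z) % 2 = 1 := by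
    intro z hzV hz
    rw [mem_insert, not_or] at hz
    have hzk := hmax z (mem_erase.2 ⟨hz.1, hzV⟩) hz.2
    rw [pairCount_insert c hz.2] at hzk
    omega
  obtain ⟨z, hzV, hz⟩ : ∃ z ∈ V, z ∉ insert y F := by
    by_contra! h
    exact (hk.trans (pairCount_mono c h)).not_gt (pairCount_insert c hyF ▸ hlt)
  obtain ⟨hy0, hz1⟩ := hodd z hzV hz
  rcases hx with heven | hone
  · have hins := colorCard_insert c hyF (c y)
    rw [if_pos rfl] at hins
    have hFy := colorCard_lt_colorCard c hFV hyV hyF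
    obtain ⟨w, hwV, hw, hwy⟩ := exists_notMem_of_colorCard_lt c
      (show colorCard c (insert y F) (c y) < colorCard c V (c y) by grind)
    have := hodd w hwV hw
    rw [hwy] at this
    omega
  · have hzF : z ∉ F := fun h => hz (mem_insert_of_mem h)
    have hFz := colorCard_lt_colorCard c hFV hzV hzF
    rw [hone z hzV (fun hzA => hzF (hAF hzA)) fun hzy => by rw [hzy] at hz1; omega] at hFz
    omega

lemma pairCount_of_maximal [Fintype σ] (hk : k ≤ pairCount c univ)
    (hF : Maximal (· ∈ matchingFreeComplex (clusterGraph c) k) F) :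
    pairCount c F + 1 = k ∧ ∀ t, colorCard c F t < colorCard c univ t → Odd (colorCard c F t) := by
  classical
  rw [← inf_top_eq (matchingFreeComplex _ k), ← LowerSet.Iic_top, top_eq_univ,
    maximal_mem_matchingFreeComplex_inf_Iic_iff] at hF
  obtain ⟨⟨hlt, -⟩, hmax⟩ := hF
  have hins : ∀ x ∉ F, k ≤ pairCount c F + colorCard c F (c x) % 2 := fun x hx =>
    pairCount_insert c hx ▸ hmax x (mem_univ x) hx
  refine ⟨?_, fun t ht => ?_⟩
  · obtain ⟨x, hx⟩ : ∃ x, x ∉ F := by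
      by_contra! h
      exact hk.not_gt (eq_univ_of_forall h ▸ hlt)
    have := hins x hx
    omega
  · obtain ⟨x, -, hx, rfl⟩ := exists_notMem_of_colorCard_lt c ht
    have := hins x hx
    exact Nat.odd_iff.2 (by omega)

end Fintype

variable [Finite ι] [DecidableEq σ]

lemma isVertexDecomposable_starComplex_matchingFreeComplex (t₀ : ι)
    (hsmall : ∀ t ≠ t₀, colorCard c V t ≤ 2) (hAV : A ⊆ V) :
    IsVertexDecomposable
      (starComplex (matchingFreeComplex (clusterGraph c) k ⊓ LowerSet.Iic V) A) := by
  cases nonempty_fintype ι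
  induction hn : #(V \ A) using Nat.strong_induction_on generalizing A V with
  | _ n ih =>
  subst hn
  rcases le_or_gt k (pairCount c A) with hA | hA
  · have hvoid : starComplex (matchingFreeComplex (clusterGraph c) k ⊓ LowerSet.Iic V) A = ⊥ :=
      eq_bot_iff.2 fun F hF => absurd
        ((mem_matchingFreeComplex_clusterGraph_iff c).1 (LowerSet.lower _ subset_union_right hF.1))
        hA.not_gt
    exact hvoid ▸ .void
  rcases lt_or_ge (pairCount c V) k with hV | hV
  · have hsimplex : starComplex (matchingFreeComplex (clusterGraph c) k ⊓ LowerSet.Iic V) A =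
        LowerSet.Iic V := SetLike.ext fun F => ⟨fun hF => subset_union_left.trans hF.2, fun hF =>
      have hFA : F ∪ A ⊆ V := union_subset hF hAV
      ⟨(mem_matchingFreeComplex_clusterGraph_iff c).2 ((pairCount_mono c hFA).trans_lt hV), hFA⟩⟩
    rw [hsimplex]
    exact .simplex V
  obtain ⟨x, hxV, hxA, hx⟩ := exists_shedding c t₀ hsmall (hA.trans_le hV)
  have hxVA : x ∈ V \ A := mem_sdiff.2 ⟨hxV, hxA⟩
  refine .of_shedding x ?_ ?_ fun F hF => ?_
  · rw [starComplex_starComplex, ← insert_eq]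
    exact ih _ (by rw [sdiff_insert]; exact card_erase_lt_of_mem hxVA) hsmall
      (insert_subset hxV hAV) rfl
  · rw [starComplex_inf_Iic_erase_singleton hxA]
    exact ih _ (by rw [erase_sdiff_comm]; exact card_erase_lt_of_mem hxVA)
      (fun t ht => (colorCard_mono c (erase_subset x V) t).trans (hsmall t ht))
      (subset_erase.2 ⟨hAV, hxA⟩) rfl
  · rw [starComplex_inf_Iic_erase_singleton hxA, maximal_mem_starComplex_iff] at hF
    exact maximal_mem_starComplex_iff.2
      ⟨maximal_of_maximal_mem_matchingFreeComplex_erase c hV hF.2 hx hF.1, hF.2⟩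

lemma isVertexDecomposable_matchingFreeComplex_clusterGraph [Fintype σ] (t₀ : ι)
    (hsmall : ∀ t ≠ t₀, colorCard c univ t ≤ 2) (k : ℕ) :
    IsVertexDecomposable (matchingFreeComplex (clusterGraph c) k) := by
  have h := isVertexDecomposable_starComplex_matchingFreeComplex c (k := k) t₀ hsmall
    (empty_subset univ)
  have huniv : starComplex (matchingFreeComplex (clusterGraph c) k ⊓ LowerSet.Iic univ) ∅ =
      matchingFreeComplex (clusterGraph c) k := by
    rw [← top_eq_univ, LowerSet.Iic_top, inf_top_eq]
    exact SetLike.ext fun F => by rw [mem_starComplex, union_empty]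
  exact huniv ▸ h

end ClusterGraphs

section OneLargeColor

open Finset

variable {σ κ : Type} [Fintype κ] [DecidableEq κ] (c : σ → Option κ) {F : Finset σ} {k r : ℕ}

lemma pairCount_option (h₂ : ∀ t, colorCard c F (some t) ≤ 2) :
    pairCount c F = #{t | colorCard c F (some t) = 2} + colorCard c F none / 2 := by
  rw [pairCount, Fintype.sum_option, add_comm, card_filter]
  congr 1
  refine sum_congr rfl fun t _ => ?_
  have := h₂ t
  split_ifs <;> omega

lemma card_option (h₁ : ∀ t, 1 ≤ colorCard c F (some t)) (h₂ : ∀ t, colorCard c F (some t) ≤ 2) :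
    #F = Fintype.card κ + #{t | colorCard c F (some t) = 2} + colorCard c F none := by
  rw [← sum_colorCard c F, Fintype.sum_option, add_comm, ← card_univ, card_eq_sum_ones, card_filter,
    ← sum_add_distrib]
  congr 1
  refine sum_congr rfl fun t _ => ?_
  have := h₁ t
  have := h₂ t
  split_ifs <;> omega

variable [Fintype σ]

lemma pairCount_univ_option (hsome : ∀ t, colorCard c univ (some t) = 2)
    (hnone : colorCard c univ none = 2 * r) : pairCount c univ = Fintype.card κ + r := by
  simp [pairCount, Fintype.sum_option, hsome, hnone, add_comm]

lemma card_of_maximal (hsome : ∀ t, colorCard c univ (some t) = 2)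
    (hk : k ≤ pairCount c univ) (hF : Maximal (· ∈ matchingFreeComplex (clusterGraph c) k) F) :
    #{t | colorCard c F (some t) = 2} + colorCard c F none / 2 + 1 = k ∧
      #F = Fintype.card κ + #{t | colorCard c F (some t) = 2} + colorCard c F none ∧
      (Odd (colorCard c F none) ∨ colorCard c F none = colorCard c univ none) := by
  obtain ⟨hpair, hodd⟩ := pairCount_of_maximal c hk hF
  have hle := colorCard_mono c (subset_univ F)
  have h₂ (t : κ) : colorCard c F (some t) ≤ 2 := (hle _).trans_eq (hsome t)
  have h₁ (t : κ) : 1 ≤ colorCard c F (some t) := by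
    by_contra! h
    exact absurd (hodd (some t) (by rw [hsome]; omega)).pos (by omega)
  exact ⟨pairCount_option c h₂ ▸ hpair, card_option c h₁ h₂,
    (hle none).lt_or_eq.imp_left (hodd none)⟩

lemma max_le_card_of_maximal (hr : 1 ≤ r) (hkr : k ≤ Fintype.card κ + r)
    (hsome : ∀ t, colorCard c univ (some t) = 2) (hnone : colorCard c univ none = 2 * r)
    (hF : Maximal (· ∈ matchingFreeComplex (clusterGraph c) k) F) :
    max (Fintype.card κ + k) (2 * k - 1) ≤ #F := by
  obtain ⟨hk, hcard, hodd⟩ := card_of_maximal c hsome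
    (hkr.trans_eq (pairCount_univ_option c hsome hnone).symm) hF
  have hp : #{t | colorCard c F (some t) = 2} ≤ Fintype.card κ := card_le_univ _
  rw [hnone, Nat.odd_iff] at hodd
  omega

lemma exists_maximal_card_eq_max (hk : 1 ≤ k) (hr : 1 ≤ r) (hkr : k ≤ Fintype.card κ + r)
    (hsome : ∀ t, colorCard c univ (some t) = 2) (hnone : colorCard c univ none = 2 * r) :
    ∃ F, Maximal (· ∈ matchingFreeComplex (clusterGraph c) k) F ∧
      #F = max (Fintype.card κ + k) (2 * k - 1) := by
  obtain ⟨T, -, hT⟩ := exists_subset_card_eq (s := (univ : Finset κ))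
    (n := min (k - 1) (Fintype.card κ)) (by simp)
  let E : Finset σ := {x | c x ∈ T.map .some}
  have hEsome (t : κ) : colorCard c E (some t) = if t ∈ T then 2 else 0 := by
    rw [colorCard_filter_mem]
    simp [hsome]
  have hEnone : colorCard c E none = 0 := by
    rw [colorCard_filter_mem]
    simp
  have hEk : E ∈ matchingFreeComplex (clusterGraph c) k := by
    have hpair : pairCount c E = #T := by
      simp [pairCount, Fintype.sum_option, hEsome, hEnone, apply_ite (· / 2)]
    rw [mem_matchingFreeComplex_clusterGraph_iff, hpair]
    omega
  obtain ⟨F, hEF, hF⟩ := Finite.exists_le_maximal hEk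
  obtain ⟨hpair, hcard, hodd⟩ := card_of_maximal c hsome
    (hkr.trans_eq (pairCount_univ_option c hsome hnone).symm) hF
  have hTp : #T ≤ #{t | colorCard c F (some t) = 2} := card_le_card fun t ht =>
    mem_filter.2 ⟨mem_univ t, ((colorCard_mono c (subset_univ F) _).trans_eq (hsome t)).antisymm
      (by simpa [hEsome, ht] using colorCard_mono c hEF (some t))⟩
  have hp : #{t | colorCard c F (some t) = 2} ≤ Fintype.card κ := card_le_univ _
  refine ⟨F, hF, ?_⟩
  rw [hnone, Nat.odd_iff] at hodd
  omega

lemma nDepth_edgeIdeal_clusterGraph (K : Type) [Field K] (hk : 1 ≤ k) (hr : 1 ≤ r)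
    (hkr : k ≤ Fintype.card κ + r) (hsome : ∀ t, colorCard c univ (some t) = 2)
    (hnone : colorCard c univ none = 2 * r) :
    nDepth K (edgeIdeal K (clusterGraph c)) k = max (Fintype.card κ - (k - 1) : ℤ) 0 := by
  classical
  obtain ⟨F, hF, hcard⟩ := exists_maximal_card_eq_max c hk hr hkr hsome hnone
  have hdec : IsVertexDecomposable (matchingFreeComplex (clusterGraph c) k) :=
    isVertexDecomposable_matchingFreeComplex_clusterGraph c none (fun t ht => by
      obtain ⟨t, rfl⟩ := Option.ne_none_iff_exists'.1 ht
      exact (hsome t).le) k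
  have hmatch : HasMatching (clusterGraph c) k univ :=
    (hasMatching_clusterGraph_iff c).2 (hkr.trans_eq (pairCount_univ_option c hsome hnone).symm)
  rw [nDepth, sqfreePower_edgeIdeal, hmatch.indeg_faceIdeal_matchingFreeComplex,
    hdec.polyDepth_faceIdeal hF fun F' hF' =>
      hcard.trans_le (max_le_card_of_maximal c hr hkr hsome hnone hF'), hcard]
  omega

end OneLargeColor

/-- Given positive integers `s < m`, there exists a graph `G` with no isolated vertices
and matching number `ν(G) = m` such that `g_{I(G)}(k) = s − (k−1)` for `k = 1,…,s` and
`g_{I(G)}(k) = 0` for `k = s+1,…,m`. -/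
theorem exists_graph_normalized_depth_prescribed (K : Type) [Field K]
    (s m : ℕ) (hs : 1 ≤ s) (hsm : s < m) :
    ∃ (n : ℕ) (G : SimpleGraph (Fin n)), NoIsolated G ∧ matchNum G = m ∧
      (∀ k : ℕ, 1 ≤ k → k ≤ s →
        nDepth K (edgeIdeal K G) k = (s : ℤ) - ((k : ℤ) - 1)) ∧
      (∀ k : ℕ, s + 1 ≤ k → k ≤ m → nDepth K (edgeIdeal K G) k = 0) := by
  obtain ⟨r, rfl⟩ := Nat.exists_eq_add_of_lt hsm
  obtain ⟨c, hc⟩ := exists_colorCard_univ_eq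
    (ι := Option (Fin s)) fun t => t.elim (2 * (r + 1)) fun _ => 2
  have hsome (t : Fin s) : colorCard c Finset.univ (some t) = 2 := hc (some t)
  have hnone : colorCard c Finset.univ none = 2 * (r + 1) := hc none
  have hdepth (k : ℕ) (hk : 1 ≤ k) (hkm : k ≤ s + r + 1) :
      nDepth K (edgeIdeal K (clusterGraph c)) k = max (s - (k - 1) : ℤ) 0 := by
    simpa using nDepth_edgeIdeal_clusterGraph c K hk (Nat.le_add_left 1 r)
      (by rwa [Fintype.card_fin]) hsome hnone
  refine ⟨_, clusterGraph c, noIsolated_clusterGraph c fun t => ?_, ?_, fun k hk hks => ?_,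
    fun k hks hkm => ?_⟩
  · cases t <;> grind
  · rw [matchNum_clusterGraph, pairCount_univ_option c hsome hnone, Fintype.card_fin, add_assoc]
  · rw [hdepth k hk (by omega)]
    omega
  · rw [hdepth k (by omega) hkm]
    omega
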